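/- Weighted landscape stability: let M, N be n-parameter persistence modules, let w ∈ ℝ^n with w_i > 0 and ‖w‖_∞ = 1, and let ω, ω^w be the sublinear projections ω_Γ = ‖Γ − id‖_∞ and ω^w_Γ = ‖Γ − id‖_∞^w. Then sup_{k,x} |λ_w(M)(k,x) − λ_w(N)(k,x)| ≤ d^{ω^w}(M,N) ≤ d^ω(M,N). -/

import Mathlib

open scoped ENNReal NNReal BigOperators

universe u v w

/-- A persistence module over a preorder `P` with coefficients in a field `𝕜`:
a functor from the poset `P` to the category of `𝕜`-vector spaces. -/
structure PersistenceModule (P : Type u) [Preorder P] (𝕜 : Type v) [Field 𝕜] where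
  obj : P → Type w
  [isAddCommGroup : ∀ a, AddCommGroup (obj a)]
  [isModule : ∀ a, Module 𝕜 (obj a)]
  map : ∀ {a b : P}, a ≤ b → (obj a →ₗ[𝕜] obj b)
  map_id : ∀ a : P, map (le_refl a) = LinearMap.id
  map_comp : ∀ {a b c : P} (hab : a ≤ b) (hbc : b ≤ c),
      map (le_trans hab hbc) = (map hbc).comp (map hab)

attribute [instance] PersistenceModule.isAddCommGroup PersistenceModule.isModule

namespace PersistenceModule

variable {P : Type u} [Preorder P] {𝕜 : Type v} [Field 𝕜]

/-- The rank invariant `β^{a,b} = dim (Im (M (a ≤ b)))`. -/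
noncomputable def rankInv (M : PersistenceModule P 𝕜) {a b : P} (hab : a ≤ b) : Cardinal :=
  Module.rank 𝕜 (LinearMap.range (M.map hab))

/-- Pointwise finite dimensional persistence module. -/
def PointwiseFiniteDimensional (M : PersistenceModule P 𝕜) : Prop :=
  ∀ a : P, FiniteDimensional 𝕜 (M.obj a)

section Landscape

variable {n : ℕ}

lemma sub_le_add_self {x h : Fin n → ℝ} (hh : 0 ≤ h) : x - h ≤ x + h :=
  le_trans (sub_le_self x hh) (le_add_of_nonneg_right hh)

/-- Generalised landscape function with respect to a size function `ν` on `ℝⁿ`: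
`λ(k, x) = sup { ε ≥ 0 : β^{x-h, x+h} ≥ k for all h ≥ 0 with ν h ≤ ε }`. -/
noncomputable def landscapeBy (ν : (Fin n → ℝ) → ℝ)
    (M : PersistenceModule (Fin n → ℝ) 𝕜) (k : ℕ) (x : Fin n → ℝ) : ℝ≥0∞ :=
  sSup {ε : ℝ≥0∞ | ∀ h : Fin n → ℝ, (hh : 0 ≤ h) → ENNReal.ofReal (ν h) ≤ ε →
    (k : Cardinal) ≤ M.rankInv (sub_le_add_self hh (x := x))}

/-- The uniform persistence `∞`-landscape (the sup norm is the norm on `Fin n → ℝ`). -/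
noncomputable def landscapeInfty (M : PersistenceModule (Fin n → ℝ) 𝕜) :
    ℕ → (Fin n → ℝ) → ℝ≥0∞ :=
  landscapeBy (fun h => ‖h‖) M

/-- The `w`-weighted infinity norm `‖h‖_∞^w = max_i |w_i h_i|`. -/
noncomputable def wnorm (w : Fin n → ℝ) (h : Fin n → ℝ) : ℝ :=
  ‖fun i => w i * h i‖

/-- The `w`-weighted persistence landscape. -/
noncomputable def landscapeW (w : Fin n → ℝ) (M : PersistenceModule (Fin n → ℝ) 𝕜) :
    ℕ → (Fin n → ℝ) → ℝ≥0∞ :=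
  landscapeBy (wnorm w) M

/-- The `p`-norm on `ℝⁿ`, via `PiLp`. -/
noncomputable def pnorm (p : ℝ≥0∞) [Fact (1 ≤ p)] (h : Fin n → ℝ) : ℝ :=
  ‖(WithLp.equiv p (Fin n → ℝ)).symm h‖

/-- The uniform persistence `p`-landscape. -/
noncomputable def landscapeP (p : ℝ≥0∞) [Fact (1 ≤ p)]
    (M : PersistenceModule (Fin n → ℝ) 𝕜) : ℕ → (Fin n → ℝ) → ℝ≥0∞ :=
  landscapeBy (pnorm p) M

end Landscape

section Interleaving

/-- An `(Γ, K)`-interleaving between two persistence modules. -/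
structure Interleaving (M N : PersistenceModule P 𝕜) (Γ K : P → P)
    (hΓ : Monotone Γ) (hΓi : ∀ x, x ≤ Γ x) (hK : Monotone K) (hKi : ∀ x, x ≤ K x) where
  φ : ∀ a : P, M.obj a →ₗ[𝕜] N.obj (Γ a)
  ψ : ∀ a : P, N.obj a →ₗ[𝕜] M.obj (K a)
  φ_nat : ∀ {a b : P} (hab : a ≤ b), (φ b).comp (M.map hab) = (N.map (hΓ hab)).comp (φ a)
  ψ_nat : ∀ {a b : P} (hab : a ≤ b), (ψ b).comp (N.map hab) = (M.map (hK hab)).comp (ψ a)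
  comm₁ : ∀ a : P, (ψ (Γ a)).comp (φ a) = M.map ((hΓi a).trans (hKi (Γ a)))
  comm₂ : ∀ a : P, (φ (K a)).comp (ψ a) = N.map ((hKi a).trans (hΓi (K a)))

variable {n : ℕ}

/-- Interleaving distance with respect to the sublinear projection induced by a size
function `ν`, i.e. `ω_Γ = sup_x ν (Γ x - x)`. -/
noncomputable def interleavingDistBy (ν : (Fin n → ℝ) → ℝ)
    (M N : PersistenceModule (Fin n → ℝ) 𝕜) : ℝ≥0∞ :=
  sInf {ε : ℝ≥0∞ | ∃ (Γ K : (Fin n → ℝ) → (Fin n → ℝ)) (hΓ : Monotone Γ)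
    (hΓi : ∀ x, x ≤ Γ x) (hK : Monotone K) (hKi : ∀ x, x ≤ K x),
    Nonempty (Interleaving M N Γ K hΓ hΓi hK hKi) ∧
    (⨆ x, ENNReal.ofReal (ν (Γ x - x))) ≤ ε ∧ (⨆ x, ENNReal.ofReal (ν (K x - x))) ≤ ε}

/-- The interleaving distance with respect to `ω_Γ = ‖Γ - id‖_∞`. -/
noncomputable def interleavingDist (M N : PersistenceModule (Fin n → ℝ) 𝕜) : ℝ≥0∞ :=
  interleavingDistBy (fun h => ‖h‖) M N

end Interleaving

end PersistenceModule

namespace PersistenceModule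

lemma rank_factor {𝕜 : Type v} [Field 𝕜] {A B C D : Type*} [AddCommGroup A] [AddCommGroup B]
    [AddCommGroup C] [AddCommGroup D] [Module 𝕜 A] [Module 𝕜 B] [Module 𝕜 C] [Module 𝕜 D]
    (e : A →ₗ[𝕜] B) (f : B →ₗ[𝕜] C) (g : C →ₗ[𝕜] D) (k : ℕ)
    (hk : (k : Cardinal) ≤ Module.rank 𝕜 (LinearMap.range (g.comp (f.comp e)))) :
    (k : Cardinal) ≤ Module.rank 𝕜 (LinearMap.range f) := by
  have hsub : LinearMap.range (g.comp (f.comp e)) ≤ (LinearMap.range f).map g := by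
    rintro _ ⟨a, rfl⟩
    exact ⟨f (e a), ⟨e a, rfl⟩, rfl⟩
  have h1 := hk.trans (Submodule.rank_mono hsub)
  have h2 := lift_rank_map_le g (LinearMap.range f)
  have h3 := (Cardinal.lift_le.2 h1).trans h2
  rw [Cardinal.lift_natCast] at h3
  exact Cardinal.nat_le_lift_iff.1 h3

lemma wnorm_le_norm {n : ℕ} (w : Fin n → ℝ) (hw1 : ‖w‖ = 1) (h : Fin n → ℝ) :
    wnorm w h ≤ ‖h‖ := by
  unfold wnorm
  refine (pi_norm_le_iff_of_nonneg (norm_nonneg _)).2 fun i => ?_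
  rw [norm_mul]
  have h1 : ‖w i‖ ≤ 1 := hw1 ▸ norm_le_pi_norm w i
  have h2 := norm_le_pi_norm h i
  nlinarith [norm_nonneg (h i), norm_nonneg (w i)]

/-- If the weighted displacement is at most `ε`, each coordinate moves at most `ε / w i`. -/
lemma le_add_of_disp {n : ℕ} (w : Fin n → ℝ) (hw : ∀ i, 0 < w i) (ε : ℝ≥0)
    (Γ : (Fin n → ℝ) → (Fin n → ℝ))
    (h : (⨆ x, ENNReal.ofReal (wnorm w (Γ x - x))) ≤ (ε : ℝ≥0∞)) (x : Fin n → ℝ) :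
    Γ x ≤ x + fun i => (ε : ℝ) / w i := by
  have h1 : ENNReal.ofReal (wnorm w (Γ x - x)) ≤ ENNReal.ofReal (ε : ℝ) := by
    rw [ENNReal.ofReal_coe_nnreal]
    exact (le_iSup (fun x => ENNReal.ofReal (wnorm w (Γ x - x))) x).trans h
  have h2 := (ENNReal.ofReal_le_ofReal_iff ε.coe_nonneg).1 h1
  intro i
  have h3 : ‖w i * (Γ x i - x i)‖ ≤ ε :=
    (norm_le_pi_norm (fun i => w i * (Γ x - x) i) i).trans h2
  have h4 := (le_abs_self _).trans h3
  have h5 : Γ x i - x i ≤ ε / w i := by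
    rw [le_div_iff₀ (hw i)]; linarith
  simp only [Pi.add_apply]
  linarith

lemma wnorm_add_le {n : ℕ} (w : Fin n → ℝ) (hw : ∀ i, 0 < w i) (ε : ℝ≥0) (h : Fin n → ℝ) :
    wnorm w (h + fun i => (ε : ℝ) / w i) ≤ wnorm w h + ε := by
  unfold wnorm
  refine (pi_norm_le_iff_of_nonneg (add_nonneg (norm_nonneg _) ε.coe_nonneg)).2 fun i => ?_
  have h1 : w i * (h + fun i => (ε : ℝ) / w i) i = w i * h i + ε := by
    have := (hw i).ne'
    simp only [Pi.add_apply]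
    field_simp
  rw [h1]
  refine (norm_add_le _ _).trans ?_
  have h2 := norm_le_pi_norm (fun i => w i * h i) i
  have h3 : ‖(ε : ℝ)‖ = ε := by simp
  rw [h3]
  simpa using h2

/-- Swapping the roles of the two modules in an interleaving. -/
def Interleaving.swap {P : Type*} [Preorder P] {𝕜 : Type v} [Field 𝕜]
    {M N : PersistenceModule P 𝕜} {Γ K : P → P} {hΓ : Monotone Γ} {hΓi : ∀ x, x ≤ Γ x}
    {hK : Monotone K} {hKi : ∀ x, x ≤ K x} (I : Interleaving M N Γ K hΓ hΓi hK hKi) :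
    Interleaving N M K Γ hK hKi hΓ hΓi where
  φ := I.ψ
  ψ := I.φ
  φ_nat := I.ψ_nat
  ψ_nat := I.φ_nat
  comm₁ := I.comm₂
  comm₂ := I.comm₁

lemma Interleaving.rank_le {P : Type*} [Preorder P] {𝕜 : Type v} [Field 𝕜]
    {M N : PersistenceModule P 𝕜} {Γ K : P → P} {hΓ : Monotone Γ} {hΓi : ∀ x, x ≤ Γ x}
    {hK : Monotone K} {hKi : ∀ x, x ≤ K x} (I : Interleaving M N Γ K hΓ hΓi hK hKi)
    {a b c d : P} (had : a ≤ d) (hbc : b ≤ c) (hab : Γ a ≤ b) (hcd : K c ≤ d) (k : ℕ)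
    (hk : (k : Cardinal) ≤ M.rankInv had) : (k : Cardinal) ≤ N.rankInv hbc := by
  have key : M.map had = ((M.map hcd).comp (I.ψ c)).comp
      ((N.map hbc).comp ((N.map hab).comp (I.φ a))) := by
    rw [← LinearMap.comp_assoc (I.φ a), ← N.map_comp hab hbc, LinearMap.comp_assoc,
      ← LinearMap.comp_assoc (I.φ a), I.ψ_nat, LinearMap.comp_assoc, I.comm₁, ← M.map_comp,
      ← M.map_comp]
  unfold rankInv at hk ⊢
  rw [key] at hk
  exact rank_factor _ _ _ k hk

lemma landscapeW_le_of_interleaving {n : ℕ} {𝕜 : Type v} [Field 𝕜]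
    {M N : PersistenceModule (Fin n → ℝ) 𝕜}
    (w : Fin n → ℝ) (hw : ∀ i, 0 < w i) (ε : ℝ≥0∞) {Γ K : (Fin n → ℝ) → (Fin n → ℝ)}
    {hΓ : Monotone Γ} {hΓi : ∀ x, x ≤ Γ x}
    {hK : Monotone K} {hKi : ∀ x, x ≤ K x} (I : Interleaving M N Γ K hΓ hΓi hK hKi)
    (h1 : (⨆ x, ENNReal.ofReal (wnorm w (Γ x - x))) ≤ ε)
    (h2 : (⨆ x, ENNReal.ofReal (wnorm w (K x - x))) ≤ ε) (k : ℕ) (x : Fin n → ℝ) :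
    landscapeW w M k x ≤ landscapeW w N k x + ε := by
  induction ε using ENNReal.recTopCoe with
  | top => simp
  | coe ε =>
  refine sSup_le fun t ht => ?_
  rcases le_total t (ε : ℝ≥0∞) with hte | hte
  · exact hte.trans le_add_self
  rw [← tsub_le_iff_right]
  refine le_sSup fun h hh hht => ?_
  have hd : (0 : Fin n → ℝ) ≤ fun i => (ε : ℝ) / w i :=
    fun i => div_nonneg ε.coe_nonneg (hw i).le
  have hh' : 0 ≤ h + fun i => (ε : ℝ) / w i := add_nonneg hh hd
  have hb : ENNReal.ofReal (wnorm w (h + fun i => (ε : ℝ) / w i)) ≤ t := by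
    refine (ENNReal.ofReal_le_ofReal (wnorm_add_le w hw ε h)).trans ?_
    rw [ENNReal.ofReal_add (show 0 ≤ wnorm w h from norm_nonneg _) ε.coe_nonneg, ENNReal.ofReal_coe_nnreal]
    exact (add_le_add_left hht _).trans (tsub_add_cancel_of_le hte).le
  refine I.rank_le (sub_le_add_self hh') _ ?_ ?_ k (ht _ hh' hb)
  · refine (le_add_of_disp w hw ε Γ h1 _).trans (le_of_eq ?_)
    abel
  · refine (le_add_of_disp w hw ε K h2 _).trans (le_of_eq ?_)
    abel

/-- Weighted landscape stability: for `n`-parameter persistence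
modules `M, N` and a weighting vector `w` (with `w_i > 0` and `‖w‖_∞ = 1`),
`sup_{k,x} |λ_w(M)(k,x) − λ_w(N)(k,x)| ≤ d^{ω^w}(M,N) ≤ d^ω(M,N)`, where `ω` and
`ω^w` are the sublinear projections `ω_Γ = ‖Γ − id‖_∞` and `ω^w_Γ = ‖Γ − id‖_∞^w`
(the first bound is stated pointwise in `k` and `x` as the pair of inequalities
expressing the bound on the absolute difference in `ℝ≥0∞`, which is equivalent to
the bound on the supremum). -/
theorem landscapeW_stability {n : ℕ} {𝕜 : Type v} [Field 𝕜]
    (M N : PersistenceModule (Fin n → ℝ) 𝕜)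
    (w : Fin n → ℝ) (hw : ∀ i, 0 < w i) (hw1 : ‖w‖ = 1) :
    (∀ (k : ℕ) (x : Fin n → ℝ),
      landscapeW w M k x ≤ landscapeW w N k x + interleavingDistBy (wnorm w) M N ∧
      landscapeW w N k x ≤ landscapeW w M k x + interleavingDistBy (wnorm w) M N) ∧
    interleavingDistBy (wnorm w) M N ≤ interleavingDist M N := by
  refine ⟨fun k x => ⟨?_, ?_⟩, ?_⟩
  · rw [← tsub_le_iff_left]
    refine le_sInf ?_
    rintro ε ⟨Γ, K, hΓ, hΓi, hK, hKi, ⟨I⟩, h1, h2⟩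
    rw [tsub_le_iff_left]
    exact landscapeW_le_of_interleaving w hw ε I h1 h2 k x
  · rw [← tsub_le_iff_left]
    refine le_sInf ?_
    rintro ε ⟨Γ, K, hΓ, hΓi, hK, hKi, ⟨I⟩, h1, h2⟩
    rw [tsub_le_iff_left]
    exact landscapeW_le_of_interleaving w hw ε I.swap h2 h1 k x
  · refine sInf_le_sInf ?_
    rintro ε ⟨Γ, K, hΓ, hΓi, hK, hKi, hI, h1, h2⟩
    exact ⟨Γ, K, hΓ, hΓi, hK, hKi, hI,
      (iSup_mono fun x => ENNReal.ofReal_le_ofReal (wnorm_le_norm w hw1 _)).trans h1,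
      (iSup_mono fun x => ENNReal.ofReal_le_ofReal (wnorm_le_norm w hw1 _)).trans h2⟩

end PersistenceModule
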